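/- Let V be a finite-dimensional real vector space, ω a linear symplectic form on V, and v, u ∈ V vectors with ω(v, u) > 0. Then there exists a complex structure J on V that is compatible with ω and satisfies J v = u (and consequently J u = −v). -/

import Mathlib

/-- A linear symplectic form: an alternating, nondegenerate bilinear form. -/
def IsSymplecticForm {V : Type*} [AddCommGroup V] [Module ℝ V]
    (ω : V →ₗ[ℝ] V →ₗ[ℝ] ℝ) : Prop :=
  (∀ v, ω v v = 0) ∧ ∀ v, v ≠ 0 → ∃ w, ω v w ≠ 0

/-- A complex structure: a linear endomorphism with `J ∘ J = -id`. -/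
def IsComplexStructure {V : Type*} [AddCommGroup V] [Module ℝ V]
    (J : V →ₗ[ℝ] V) : Prop :=
  ∀ v, J (J v) = -v

/-- `J` is compatible with `ω`: tamed by `ω` and `ω(Ju, Jv) = ω(u, v)`. -/
def CompatibleWith {V : Type*} [AddCommGroup V] [Module ℝ V]
    (ω : V →ₗ[ℝ] V →ₗ[ℝ] ℝ) (J : V →ₗ[ℝ] V) : Prop :=
  (∀ v, v ≠ 0 → 0 < ω v (J v)) ∧ ∀ u v, ω (J u) (J v) = ω u v

/-- The `ω`-orthogonal complement of the plane spanned by `v` and `u`. -/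
def symplecticPlaneComplement {V : Type*} [AddCommGroup V] [Module ℝ V]
    (ω : V →ₗ[ℝ] V →ₗ[ℝ] ℝ) (v u : V) : Submodule ℝ V :=
  LinearMap.ker (ω v) ⊓ LinearMap.ker (ω u)

section

variable {V : Type*} [AddCommGroup V] [Module ℝ V] {ω : V →ₗ[ℝ] V →ₗ[ℝ] ℝ} {v u : V}

lemma mem_symplecticPlaneComplement {x : V} :
    x ∈ symplecticPlaneComplement ω v u ↔ ω v x = 0 ∧ ω u x = 0 := by
  simp [symplecticPlaneComplement]

lemma IsSymplecticForm.neg (hω : IsSymplecticForm ω) (x y : V) : ω y x = -ω x y := by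
  have h := hω.1 (x + y)
  simp only [map_add, LinearMap.add_apply, hω.1] at h
  linarith

lemma IsSymplecticForm.sub_mem_symplecticPlaneComplement (hω : IsSymplecticForm ω)
    (hvu : ω v u ≠ 0) (x : V) :
    x - (ω x u / ω v u) • v - (ω v x / ω v u) • u ∈ symplecticPlaneComplement ω v u := by
  rw [mem_symplecticPlaneComplement]
  constructor
  · simp [hω.1, hvu]
  · simp [hω.1, hω.neg v u, hω.neg x u, hvu]

lemma IsSymplecticForm.exists_eq_add (hω : IsSymplecticForm ω) (hvu : ω v u ≠ 0) (x : V) :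
    ∃ (a b : ℝ) (w : symplecticPlaneComplement ω v u), x = a • v + b • u + w :=
  ⟨ω x u / ω v u, ω v x / ω v u, ⟨_, hω.sub_mem_symplecticPlaneComplement hvu x⟩, by
    simp only; abel⟩

/-- An endomorphism of the complement extends to `V` by the rotation `v ↦ u`, `u ↦ -v`. -/
lemma IsSymplecticForm.exists_extension (hω : IsSymplecticForm ω) (hvu : ω v u ≠ 0)
    (J : symplecticPlaneComplement ω v u →ₗ[ℝ] symplecticPlaneComplement ω v u) :
    ∃ K : V →ₗ[ℝ] V, ∀ (a b : ℝ) (w : symplecticPlaneComplement ω v u),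
      K (a • v + b • u + w) = (-b) • v + a • u + J w := by
  let p : V →ₗ[ℝ] ℝ := (ω v u)⁻¹ • ω.flip u
  let q : V →ₗ[ℝ] ℝ := (ω v u)⁻¹ • ω v
  have hπ (x : V) : (LinearMap.id - p.smulRight v - q.smulRight u : V →ₗ[ℝ] V) x ∈
      symplecticPlaneComplement ω v u := by
    simpa [p, q, div_eq_inv_mul] using hω.sub_mem_symplecticPlaneComplement hvu x
  let π := LinearMap.codRestrict (symplecticPlaneComplement ω v u) _ hπ
  refine ⟨(Submodule.subtype _) ∘ₗ J ∘ₗ π + p.smulRight u - q.smulRight v, fun a b w => ?_⟩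
  obtain ⟨hvw, huw⟩ := mem_symplecticPlaneComplement.1 w.2
  have hp : p (a • v + b • u + w) = a := by
    simp [p, hω.1, hω.neg u w, huw, hvu, mul_comm a]
  have hq : q (a • v + b • u + w) = b := by
    simp [q, hω.1, hvw, hvu, mul_comm b]
  have hw : π (a • v + b • u + w) = w := by
    apply Subtype.ext
    simp only [π, LinearMap.codRestrict_apply, LinearMap.sub_apply, LinearMap.id_apply,
      LinearMap.smulRight_apply, hp, hq]
    abel
  simp only [LinearMap.sub_apply, LinearMap.add_apply, LinearMap.comp_apply,
    LinearMap.smulRight_apply, hp, hq, hw, Submodule.subtype_apply, neg_smul]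
  abel

lemma IsSymplecticForm.apply_add_add (hω : IsSymplecticForm ω)
    (a b c d : ℝ) (w z : symplecticPlaneComplement ω v u) :
    ω (a • v + b • u + w) (c • v + d • u + z) = (a * d - b * c) * ω v u + ω w z := by
  obtain ⟨hvw, huw⟩ := mem_symplecticPlaneComplement.1 w.2
  obtain ⟨hvz, huz⟩ := mem_symplecticPlaneComplement.1 z.2
  simp only [map_add, map_smul, LinearMap.add_apply, LinearMap.smul_apply, smul_eq_mul, hω.1,
    hω.neg v u, hω.neg v w, hω.neg u w, hvw, huw, hvz, huz]
  ring

lemma IsSymplecticForm.domRestrict_symplecticPlaneComplement (hω : IsSymplecticForm ω)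
    (hvu : ω v u ≠ 0) :
    IsSymplecticForm (ω.domRestrict₁₂ (symplecticPlaneComplement ω v u)
      (symplecticPlaneComplement ω v u)) := by
  refine ⟨fun w => hω.1 w, fun w hw => ?_⟩
  obtain ⟨x, hx⟩ := hω.2 w (by simpa using hw)
  obtain ⟨a, b, z, rfl⟩ := hω.exists_eq_add hvu x
  refine ⟨z, ?_⟩
  have h := hω.apply_add_add 0 0 a b w z
  simp only [zero_smul, zero_add, zero_mul, sub_zero] at h
  rwa [h] at hx

lemma IsSymplecticForm.exists_compatible_of_complement (hω : IsSymplecticForm ω)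
    (hvu : 0 < ω v u)
    (h : ∃ J : symplecticPlaneComplement ω v u →ₗ[ℝ] symplecticPlaneComplement ω v u,
      IsComplexStructure J ∧ CompatibleWith (ω.domRestrict₁₂ (symplecticPlaneComplement ω v u)
        (symplecticPlaneComplement ω v u)) J) :
    ∃ J : V →ₗ[ℝ] V, IsComplexStructure J ∧ CompatibleWith ω J ∧ J v = u ∧ J u = -v := by
  obtain ⟨J, hJ, htame, hinv⟩ := h
  obtain ⟨K, hK⟩ := hω.exists_extension hvu.ne' J
  refine ⟨K, fun x => ?_, ⟨fun x hx => ?_, fun x y => ?_⟩, ?_, ?_⟩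
  · obtain ⟨a, b, w, rfl⟩ := hω.exists_eq_add hvu.ne' x
    rw [hK, hK, hJ, Submodule.coe_neg]
    module
  · obtain ⟨a, b, w, rfl⟩ := hω.exists_eq_add hvu.ne' x
    rw [hK, hω.apply_add_add]
    by_cases hw : w = 0
    · subst hw
      have hab : 0 < a * a - b * -b := by
        by_contra! hle
        have ha : a = 0 := by nlinarith [sq_nonneg a, sq_nonneg b]
        have hb : b = 0 := by nlinarith [sq_nonneg a, sq_nonneg b]
        simp [ha, hb] at hx
      simpa using mul_pos hab hvu
    · have hpos : 0 < ω w (J w) := htame w hw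
      have hab : 0 ≤ a * a - b * -b := by nlinarith [sq_nonneg a, sq_nonneg b]
      exact add_pos_of_nonneg_of_pos (mul_nonneg hab hvu.le) hpos
  · obtain ⟨a, b, w, rfl⟩ := hω.exists_eq_add hvu.ne' x
    obtain ⟨c, d, z, rfl⟩ := hω.exists_eq_add hvu.ne' y
    have hwz : ω (J w) (J z) = ω w z := hinv w z
    rw [hK, hK, hω.apply_add_add, hω.apply_add_add, hwz]
    ring
  · simpa using hK 1 0 0
  · simpa using hK 0 1 0

lemma finrank_symplecticPlaneComplement_lt [FiniteDimensional ℝ V] (hvu : ω v u ≠ 0) :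
    Module.finrank ℝ (symplecticPlaneComplement ω v u) < Module.finrank ℝ V := by
  apply Submodule.finrank_lt
  intro htop
  have hu : u ∈ symplecticPlaneComplement ω v u := htop ▸ Submodule.mem_top
  exact hvu (mem_symplecticPlaneComplement.1 hu).1

end

lemma IsSymplecticForm.exists_compatible {V : Type*} [AddCommGroup V] [Module ℝ V]
    [FiniteDimensional ℝ V] {ω : V →ₗ[ℝ] V →ₗ[ℝ] ℝ} (hω : IsSymplecticForm ω) :
    ∃ J : V →ₗ[ℝ] V, IsComplexStructure J ∧ CompatibleWith ω J := by
  induction hn : Module.finrank ℝ V using Nat.strong_induction_on generalizing V with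
  | _ n ih =>
    by_cases hV : ∃ v : V, v ≠ 0
    · obtain ⟨v, hv⟩ := hV
      obtain ⟨w, hw⟩ := hω.2 v hv
      have hpos : 0 < ω v (ω v w • w) := by
        simpa using mul_self_pos.2 hw
      obtain ⟨J, hJ, hcompat, -⟩ := hω.exists_compatible_of_complement hpos
        (ih _ (hn ▸ finrank_symplecticPlaneComplement_lt hpos.ne')
          (hω.domRestrict_symplecticPlaneComplement hpos.ne') rfl)
      exact ⟨J, hJ, hcompat⟩
    · push Not at hV
      exact ⟨0, fun v => by simp [hV v], fun v hv => absurd (hV v) hv,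
        fun x y => by simp [hV x]⟩

theorem exists_compatible_complex_structure_mapping
    {V : Type*} [AddCommGroup V] [Module ℝ V] [FiniteDimensional ℝ V]
    (ω : V →ₗ[ℝ] V →ₗ[ℝ] ℝ) (hω : IsSymplecticForm ω)
    (v u : V) (hvu : 0 < ω v u) :
    ∃ J : V →ₗ[ℝ] V, IsComplexStructure J ∧ CompatibleWith ω J ∧
      J v = u ∧ J u = -v := by
  exact hω.exists_compatible_of_complement hvu
    (hω.domRestrict_symplecticPlaneComplement hvu.ne').exists_compatible
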